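/- Suppose μ_1,…,μ_N ∈ ℂ˟ and z ∈ Cl_N(q,c) is nonzero with z γ_i = μ_i γ_i z for all i. Then μ_i μ_{i'} = 1 for all i, and μ_j = 1 whenever j = j' (i.e., for j = n+1 when N = 2n+1). -/

import Mathlib

noncomputable section

namespace FRT

/-- The "dual" index `i' = N+1-i` (0-indexed: `N-1-i`). -/
def dual {N : ℕ} (i : Fin N) : Fin N := ⟨N - 1 - i.val, by have := i.2; omega⟩

/-- Generators of the free algebra. -/
def gen {N : ℕ} (i : Fin N) : FreeAlgebra ℂ (Fin N) := FreeAlgebra.ι ℂ i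

/-- The sum `∑_{k<i} q^{2k-2i+2} γ_k γ_{k'}` appearing in the defining relations. -/
def pairSum (N : ℕ) (q : ℂ) (i : Fin N) : FreeAlgebra ℂ (Fin N) :=
  ∑ k ∈ Finset.Iio i, (q ^ (2 * (k.val : ℤ) - 2 * (i.val : ℤ) + 2)) • (gen k * gen (dual k))

/-- The defining relations of the FRT–Clifford algebra `Cl_N(q,c)`. -/
inductive Rel (N : ℕ) (q c : ℂ) : FreeAlgebra ℂ (Fin N) → FreeAlgebra ℂ (Fin N) → Prop
  | sq (i : Fin N) (h : 2 * i.val + 1 ≠ N) : Rel N q c (gen i * gen i) 0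
  | swap (i j : Fin N) (hlt : i < j) (h : i.val + j.val + 1 ≠ N) :
      Rel N q c (gen j * gen i) ((-(q ^ 2)) • (gen i * gen j))
  | pair (i : Fin N) (h : 2 * i.val + 1 < N) :
      Rel N q c (gen (dual i) * gen i)
        (-(gen i * gen (dual i)) + (q ^ 2 - q⁻¹ ^ 2) • pairSum N q i +
          algebraMap ℂ _ (c ^ 2 * q ^ ((N : ℤ) - 2 * (i.val : ℤ) - 1) * (q + q⁻¹)))
  | middle (i : Fin N) (h : 2 * i.val + 1 = N) :
      Rel N q c (gen i * gen i) ((q - q⁻¹) • pairSum N q i + algebraMap ℂ _ (c ^ 2))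

/-- The FRT–Clifford algebra `Cl_N(q,c)`. -/
abbrev Cl (N : ℕ) (q c : ℂ) := RingQuot (Rel N q c)

/-- The generators `γ_i` of `Cl_N(q,c)`. -/
def γ (N : ℕ) (q c : ℂ) (i : Fin N) : Cl N q c :=
  RingQuot.mkAlgHom ℂ (Rel N q c) (gen i)

/-- Ordered product `γ_1 γ_2 ⋯ γ_m` of the first `m` generators. -/
def prodFirst (N : ℕ) (q c : ℂ) (m : ℕ) : Cl N q c :=
  (((List.finRange N).take m).map (γ N q c)).prod

/-- Ordered product `γ_{m+1} γ_{m+2} ⋯ γ_N` (0-indexed: indices `m,…,N-1`). -/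
def prodFrom (N : ℕ) (q c : ℂ) (m : ℕ) : Cl N q c :=
  (((List.finRange N).drop m).map (γ N q c)).prod

/-- The ordered monomial `γ_1^{i_1} ⋯ γ_N^{i_N}` for `i ∈ {0,1}^N`. -/
def monoB (N : ℕ) (q c : ℂ) (f : Fin N → Bool) : Cl N q c :=
  ((List.finRange N).map (fun i => if f i then γ N q c i else 1)).prod

/-- The ordered monomial `γ_1^{i_1} ⋯ γ_n^{i_n}` for `i ∈ {0,1}^n`, `n ≤ N`. -/
def monoLow (N : ℕ) (q c : ℂ) {n : ℕ} (h : n ≤ N) (f : Fin n → Bool) : Cl N q c :=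
  ((List.finRange n).map (fun j => if f j then γ N q c (Fin.castLE h j) else 1)).prod

/-- `z` is homogeneous of `∂_i`-degree `0`: it is fixed by every algebra endomorphism
rescaling `γ_i` by `t` and `γ_{i'}` by `t⁻¹`. -/
def DegZeroAt (N : ℕ) (q c : ℂ) (i : ℕ) (z : Cl N q c) : Prop :=
  ∀ t : ℂ, t ≠ 0 → ∀ f : Cl N q c →ₐ[ℂ] Cl N q c,
    (∀ j : Fin N, f (γ N q c j) =
      (if j.val = i then t else if j.val + i + 1 = N then t⁻¹ else 1) • γ N q c j) →
    f z = z

/-!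
Write `x_i = γ_i`, `y_i = γ_{i'}` for `i < i'`. The relations say that `T_i := x_i y_i + y_i x_i`
satisfies `T_{i+1} = q² x_i y_i + q⁻² y_i x_i`, starting from a nonzero scalar `T_1`. Since
`x_i² = y_i² = 0`, we have `(q⁻² x_i y_i + q² y_i x_i) T_{i+1} = T_i²`, so each `T_i` is left
regular. If `z` commutes with `T_i`, then `μ_i μ_{i'} = 1` by regularity, and therefore `z` also
commutes with `T_{i+1}`.

For `N = 2n+1`, the last element `q² x_n y_n + q⁻² y_n x_n` is `(q + q⁻¹) γ_{n+1}²`, so `γ_{n+1}`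
is left regular. It extends to a left regular central element
`W = γ_{n+1} ∏ (x_i y_i + r_i y_i x_i)`, the product running from the innermost pair outwards, with
`r_i` determined by how `x_i` and `y_i` commute with the part of `W` already built. Every factor
after `γ_{n+1}` commutes with `z`, so `z W = μ_{n+1} W z`, and centrality of `W` forces
`μ_{n+1} = 1`.
-/

section QCommute

variable {R A : Type*} [CommSemiring R] [Semiring A] [Algebra R A]

/-- `u` and `v` commute up to the scalar `r`, in the sense that `u v = r v u`. The eigenvalue
equations `z γ_i = μ_i γ_i z` and the off-diagonal relations of `Cl_N(q,c)` have this form. -/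
def QCommute (r : R) (u v : A) : Prop := u * v = r • (v * u)

/-- The two-parameter deformation `a x y + b y x` of the anticommutator of `x` and `y`. -/
def weightedAnticomm (a b : R) (x y : A) : A := a • (x * y) + b • (y * x)

namespace QCommute

variable {r s : R} {u v w x y : A}

lemma one_iff : QCommute (1 : R) u v ↔ Commute u v := by
  rw [QCommute, one_smul]
  rfl

lemma mul_right (hv : QCommute r u v) (hw : QCommute s u w) : QCommute (r * s) u (v * w) := by
  calc u * (v * w) = r • (v * (u * w)) := by rw [← mul_assoc, hv, smul_mul_assoc, mul_assoc]
    _ = (r * s) • (v * w * u) := by rw [hw, mul_smul_comm, smul_smul, mul_assoc]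

lemma add_right (hv : QCommute r u v) (hw : QCommute r u w) : QCommute r u (v + w) := by
  rw [QCommute, mul_add, hv, hw, ← smul_add, add_mul]

lemma smul_right (a : R) (hv : QCommute r u v) : QCommute r u (a • v) := by
  rw [QCommute, mul_smul_comm, hv, smul_mul_assoc, smul_comm]

lemma weightedAnticomm_right (hx : QCommute r u x) (hy : QCommute s u y) (a b : R) :
    QCommute (r * s) u (weightedAnticomm a b x y) :=
  ((hx.mul_right hy).smul_right a).add_right ((mul_comm s r ▸ hy.mul_right hx).smul_right b)

lemma commute_weightedAnticomm (hrs : r * s = 1) (hx : QCommute r u x) (hy : QCommute s u y)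
    (a b : R) : Commute u (weightedAnticomm a b x y) :=
  one_iff.mp (hrs ▸ hx.weightedAnticomm_right hy a b)

end QCommute

end QCommute

section Field

variable {K A : Type*} [Field K] [Ring A] [Algebra K A] {r : K} {u v w x y : A}

lemma QCommute.symm (hr : r ≠ 0) (h : QCommute r u v) : QCommute r⁻¹ v u := by
  rw [QCommute, h, inv_smul_smul₀ hr]

lemma QCommute.eq_one_of_commute (h : QCommute r u v) (huv : Commute u v) (hv : IsLeftRegular v)
    (hu : u ≠ 0) : r = 1 := by
  have hvu : v * u ≠ 0 := mt hv.mul_left_eq_zero_iff.mp hu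
  refine smul_left_injective K hvu ?_
  calc r • (v * u) = u * v := Eq.symm h
    _ = (1 : K) • (v * u) := by rw [huv.eq, one_smul]

lemma isLeftRegular_weightedAnticomm {a b : K} (ha : a ≠ 0) (hb : b ≠ 0) (hx : x * x = 0)
    (hy : y * y = 0) (h : IsLeftRegular (x * y + y * x)) :
    IsLeftRegular (weightedAnticomm a b x y) := by
  have hxyyx : x * y * (y * x) = 0 := by rw [mul_assoc, ← mul_assoc y, hy, zero_mul, mul_zero]
  have hyxxy : y * x * (x * y) = 0 := by rw [mul_assoc, ← mul_assoc x, hx, zero_mul, mul_zero]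
  have hsq : weightedAnticomm a⁻¹ b⁻¹ x y * weightedAnticomm a b x y =
      (x * y + y * x) * (x * y + y * x) := by
    simp only [weightedAnticomm, add_mul, mul_add, smul_mul_assoc, mul_smul_comm, hxyyx, hyxxy,
      smul_zero, add_zero, zero_add, smul_inv_smul₀ ha, smul_inv_smul₀ hb]
  exact (hsq ▸ h.mul h).of_mul

lemma commute_left_mul_weightedAnticomm (hx : x * x = 0) (hxw : QCommute r⁻¹ x w) (hr : r ≠ 0) :
    Commute x (w * weightedAnticomm 1 r x y) := by
  calc x * (w * weightedAnticomm 1 r x y)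
      = r⁻¹ • (w * (x * x * y + r • (x * y * x))) := by
        rw [← mul_assoc, hxw, smul_mul_assoc, weightedAnticomm, one_smul, mul_assoc w x, mul_add,
          mul_smul_comm, mul_assoc, mul_assoc]
    _ = w * (x * y * x) := by
        rw [hx, zero_mul, zero_add, mul_smul_comm, inv_smul_smul₀ hr]
    _ = w * weightedAnticomm 1 r x y * x := by
        rw [weightedAnticomm, one_smul, mul_assoc w, add_mul, smul_mul_assoc, mul_assoc y, hx,
          mul_zero, smul_zero, add_zero]

lemma commute_right_mul_weightedAnticomm (hy : y * y = 0) (hyw : QCommute r y w) :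
    Commute y (w * weightedAnticomm 1 r x y) := by
  calc y * (w * weightedAnticomm 1 r x y)
      = r • (w * (y * x * y + r • (y * y * x))) := by
        rw [← mul_assoc, hyw, smul_mul_assoc, weightedAnticomm, one_smul, mul_assoc w y, mul_add,
          mul_smul_comm, mul_assoc y x, mul_assoc y y]
    _ = w * (r • (y * x * y)) := by
        rw [hy, zero_mul, smul_zero, add_zero, mul_smul_comm]
    _ = w * weightedAnticomm 1 r x y * y := by
        rw [weightedAnticomm, one_smul, mul_assoc w, add_mul, smul_mul_assoc, mul_assoc x, hy,
          mul_zero, zero_add]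

end Field

section Relations

variable {N : ℕ} {q c : ℂ} {i j : Fin N}

lemma dual_dual (i : Fin N) : dual (dual i) = i := by
  ext
  simp only [dual]
  omega

lemma dual_eq_self (h : 2 * i.val + 1 = N) : dual i = i := by
  ext
  simp only [dual]
  omega

lemma mkAlgHom_gen (N : ℕ) (q c : ℂ) (i : Fin N) :
    RingQuot.mkAlgHom ℂ (Rel N q c) (gen i) = γ N q c i := rfl

lemma γ_mul_self (h : 2 * i.val + 1 ≠ N) : γ N q c i * γ N q c i = 0 := by
  simpa only [map_mul, map_zero, mkAlgHom_gen] using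
    RingQuot.mkAlgHom_rel ℂ (Rel.sq (q := q) (c := c) i h)

lemma qcommute_γ_of_gt (hij : i < j) (h : i.val + j.val + 1 ≠ N) :
    QCommute (-q ^ 2) (γ N q c j) (γ N q c i) := by
  simpa only [QCommute, map_mul, map_smul, mkAlgHom_gen] using
    RingQuot.mkAlgHom_rel ℂ (Rel.swap (q := q) (c := c) i j hij h)

lemma qcommute_γ_of_lt (hq : q ≠ 0) (hij : i < j) (h : i.val + j.val + 1 ≠ N) :
    QCommute (-q ^ 2)⁻¹ (γ N q c i) (γ N q c j) :=
  (qcommute_γ_of_gt hij h).symm (neg_ne_zero.mpr (pow_ne_zero 2 hq))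

lemma adjoin_range_γ (N : ℕ) (q c : ℂ) : Algebra.adjoin ℂ (Set.range (γ N q c)) = ⊤ := by
  have hrange : Set.range (γ N q c) =
      RingQuot.mkAlgHom ℂ (Rel N q c) '' Set.range (FreeAlgebra.ι ℂ) := by
    rw [← Set.range_comp]
    rfl
  rw [hrange, ← AlgHom.map_adjoin, FreeAlgebra.adjoin_range_ι, Algebra.map_top,
    AlgHom.range_eq_top]
  exact RingQuot.mkAlgHom_surjective ℂ (Rel N q c)

lemma commute_of_forall_commute_γ {W : Cl N q c} (h : ∀ i, Commute (γ N q c i) W)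
    (z : Cl N q c) : Commute z W := by
  have hz : z ∈ Algebra.adjoin ℂ (Set.range (γ N q c)) := adjoin_range_γ N q c ▸ Algebra.mem_top
  refine (Algebra.commute_of_mem_adjoin_of_forall_mem_commute hz ?_).symm
  rintro _ ⟨i, rfl⟩
  exact (h i).symm

end Relations

section Anticommutators

variable {N : ℕ} {q c : ℂ} {i j : Fin N}

lemma pairSum_of_val_eq_zero (hi : i.val = 0) : pairSum N q i = 0 := by
  refine Finset.sum_eq_zero fun k hk => ?_
  have := Fin.lt_def.mp (Finset.mem_Iio.mp hk)
  omega

lemma pairSum_succ (hq : q ≠ 0) (hij : j.val = i.val + 1) :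
    pairSum N q j = (q ^ 2)⁻¹ • pairSum N q i + gen i * gen (dual i) := by
  have hIio : Finset.Iio j = insert i (Finset.Iio i) := by
    ext k
    simp only [Finset.mem_Iio, Finset.mem_insert, Fin.lt_def, Fin.ext_iff]
    omega
  have hlast : 2 * (i.val : ℤ) - 2 * (j.val : ℤ) + 2 = 0 := by omega
  have hshift (k : Fin N) : q ^ (2 * (k.val : ℤ) - 2 * (j.val : ℤ) + 2) =
      (q ^ 2)⁻¹ * q ^ (2 * (k.val : ℤ) - 2 * (i.val : ℤ) + 2) := by
    rw [← zpow_natCast, ← zpow_neg, ← zpow_add₀ hq]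
    congr 1
    omega
  rw [pairSum, hIio, Finset.sum_insert (by simp), hlast, zpow_zero, one_smul, add_comm, pairSum,
    Finset.smul_sum]
  simp only [hshift, mul_smul]

/-- The value that the relations of `Cl_N(q,c)` prescribe for `γ_i γ_{i'} + γ_{i'} γ_i` when
`i < i'`. The same formula at `i = i'` gives `(q + q⁻¹) γ_i²`, not `2 γ_i²`. -/
def anticomm (N : ℕ) (q c : ℂ) (i : Fin N) : Cl N q c :=
  (q ^ 2 - q⁻¹ ^ 2) • RingQuot.mkAlgHom ℂ (Rel N q c) (pairSum N q i) +
    algebraMap ℂ _ (c ^ 2 * q ^ ((N : ℤ) - 2 * (i.val : ℤ) - 1) * (q + q⁻¹))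

lemma anticomm_of_val_eq_zero (hi : i.val = 0) : anticomm N q c i =
    algebraMap ℂ _ (c ^ 2 * q ^ ((N : ℤ) - 2 * (i.val : ℤ) - 1) * (q + q⁻¹)) := by
  rw [anticomm, pairSum_of_val_eq_zero hi, map_zero, smul_zero, zero_add]

lemma anticomm_of_lt_dual (h : 2 * i.val + 1 < N) : anticomm N q c i =
    γ N q c i * γ N q c (dual i) + γ N q c (dual i) * γ N q c i := by
  have hrel : γ N q c (dual i) * γ N q c i =
      -(γ N q c i * γ N q c (dual i)) + anticomm N q c i := by
    have := RingQuot.mkAlgHom_rel ℂ (Rel.pair (q := q) (c := c) i h)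
    rwa [add_assoc, map_add, map_add, map_neg, map_mul, map_mul, map_smul, AlgHom.commutes] at this
  rw [hrel, add_neg_cancel_left]

lemma anticomm_of_eq_dual (h : 2 * i.val + 1 = N) :
    anticomm N q c i = (q + q⁻¹) • (γ N q c i * γ N q c i) := by
  have hrel : γ N q c i * γ N q c i =
      (q - q⁻¹) • RingQuot.mkAlgHom ℂ (Rel N q c) (pairSum N q i) + algebraMap ℂ _ (c ^ 2) := by
    simpa only [map_mul, map_add, map_smul, AlgHom.commutes, mkAlgHom_gen] using
      RingQuot.mkAlgHom_rel ℂ (Rel.middle (q := q) (c := c) i h)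
  have hexp : (N : ℤ) - 2 * (i.val : ℤ) - 1 = 0 := by omega
  rw [hrel, anticomm, hexp, zpow_zero]
  simp only [Algebra.algebraMap_eq_smul_one]
  module

lemma anticomm_succ (hq : q ≠ 0) (hij : j.val = i.val + 1) (h : 2 * i.val + 1 < N) :
    anticomm N q c j =
      weightedAnticomm (q ^ 2) (q ^ 2)⁻¹ (γ N q c i) (γ N q c (dual i)) := by
  have hexp : q ^ ((N : ℤ) - 2 * (j.val : ℤ) - 1) =
      (q ^ 2)⁻¹ * q ^ ((N : ℤ) - 2 * (i.val : ℤ) - 1) := by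
    rw [← zpow_natCast, ← zpow_neg, ← zpow_add₀ hq]
    congr 1
    omega
  have hstep : anticomm N q c j = (q ^ 2)⁻¹ • anticomm N q c i +
      (q ^ 2 - q⁻¹ ^ 2) • (γ N q c i * γ N q c (dual i)) := by
    simp only [anticomm, hexp, pairSum_succ hq hij, map_add, map_smul,
      map_mul (RingQuot.mkAlgHom ℂ (Rel N q c)), mkAlgHom_gen, Algebra.algebraMap_eq_smul_one]
    module
  rw [hstep, anticomm_of_lt_dual h, inv_pow, weightedAnticomm]
  module

lemma isLeftRegular_weightedAnticomm_γ {a b : ℂ} (ha : a ≠ 0) (hb : b ≠ 0)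
    (h : 2 * i.val + 1 < N) (hreg : IsLeftRegular (anticomm N q c i)) :
    IsLeftRegular (weightedAnticomm a b (γ N q c i) (γ N q c (dual i))) := by
  have hdual : 2 * (dual i).val + 1 ≠ N := by simp only [dual]; omega
  rw [anticomm_of_lt_dual h] at hreg
  exact isLeftRegular_weightedAnticomm ha hb (γ_mul_self h.ne) (γ_mul_self hdual) hreg

lemma isLeftRegular_anticomm (hq : q ≠ 0) (hq2 : q ^ 2 ≠ -1) (hc : c ≠ 0)
    (h : 2 * i.val + 1 ≤ N) : IsLeftRegular (anticomm N q c i) := by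
  obtain ⟨k, hk⟩ := i
  induction k with
  | zero =>
    have hqq : q + q⁻¹ ≠ 0 := fun h0 => hq2 <| by
      field_simp at h0
      linear_combination h0
    rw [anticomm_of_val_eq_zero rfl]
    exact ((IsUnit.mk0 _ (mul_ne_zero (mul_ne_zero (pow_ne_zero 2 hc) (zpow_ne_zero _ hq))
      hqq)).map (algebraMap ℂ (Cl N q c))).isRegular.left
  | succ k ih =>
    have hk' : 2 * k + 1 < N := by simp only at h; omega
    rw [anticomm_succ (i := ⟨k, by omega⟩) hq rfl hk']
    exact isLeftRegular_weightedAnticomm_γ (pow_ne_zero 2 hq) (inv_ne_zero (pow_ne_zero 2 hq))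
      hk' (ih _ hk'.le)

lemma isLeftRegular_γ_of_eq_dual (hq : q ≠ 0) (hq2 : q ^ 2 ≠ -1) (hc : c ≠ 0)
    (h : 2 * i.val + 1 = N) : IsLeftRegular (γ N q c i) := by
  have hreg := isLeftRegular_anticomm hq hq2 hc h.le
  rw [anticomm_of_eq_dual h, ← smul_mul_assoc] at hreg
  exact hreg.of_mul

end Anticommutators

section Eigenvalues

variable {N : ℕ} {q c : ℂ} {μ : Fin N → ℂ} {z : Cl N q c} {i : Fin N}

lemma mul_dual_eq_one_of_commute_anticomm (hq : q ≠ 0) (hq2 : q ^ 2 ≠ -1) (hc : c ≠ 0)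
    (hz0 : z ≠ 0) (hz : ∀ i, QCommute (μ i) z (γ N q c i)) (h : 2 * i.val + 1 < N)
    (hcomm : Commute z (anticomm N q c i)) : μ i * μ (dual i) = 1 := by
  have hT : QCommute (μ i * μ (dual i)) z (anticomm N q c i) := by
    simpa only [anticomm_of_lt_dual h, weightedAnticomm, one_smul] using
      (hz i).weightedAnticomm_right (hz (dual i)) 1 1
  exact hT.eq_one_of_commute hcomm (isLeftRegular_anticomm hq hq2 hc h.le) hz0

lemma commute_anticomm (hq : q ≠ 0) (hq2 : q ^ 2 ≠ -1) (hc : c ≠ 0) (hz0 : z ≠ 0)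
    (hz : ∀ i, QCommute (μ i) z (γ N q c i)) (h : 2 * i.val + 1 ≤ N) :
    Commute z (anticomm N q c i) := by
  obtain ⟨k, hk⟩ := i
  induction k with
  | zero =>
    rw [anticomm_of_val_eq_zero rfl]
    exact Algebra.commute_algebraMap_right _ z
  | succ k ih =>
    have hk' : 2 * k + 1 < N := by simp only at h; omega
    rw [anticomm_succ (i := ⟨k, by omega⟩) hq rfl hk']
    exact (hz _).commute_weightedAnticomm
      (mul_dual_eq_one_of_commute_anticomm hq hq2 hc hz0 hz hk' (ih _ hk'.le)) (hz _) _ _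

lemma mul_dual_eq_one_of_lt_dual (hq : q ≠ 0) (hq2 : q ^ 2 ≠ -1) (hc : c ≠ 0) (hz0 : z ≠ 0)
    (hz : ∀ i, QCommute (μ i) z (γ N q c i)) (h : 2 * i.val + 1 < N) :
    μ i * μ (dual i) = 1 :=
  mul_dual_eq_one_of_commute_anticomm hq hq2 hc hz0 hz h
    (commute_anticomm hq hq2 hc hz0 hz h.le)

end Eigenvalues

section CentralElement

variable {N : ℕ} {q c : ℂ} {i j : Fin N} {m : ℕ}

/-- The index `j - m`; its dual is `j + m` when `j` is the middle index and `m ≤ j`. -/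
def below (j : Fin N) (m : ℕ) : Fin N := ⟨j.val - m, by omega⟩

/-- The factor added to `centralElt` for the pair `γ_{j-m-1}`, `γ_{j+m+1}`. In each term of the
previous partial product there are `2m+1` generators, each commuting with `γ_{j+m+1}` up to
`-q²`. -/
def centralFactor (N : ℕ) (q c : ℂ) (j : Fin N) (m : ℕ) : Cl N q c :=
  weightedAnticomm 1 ((-q ^ 2) ^ (2 * m + 1)) (γ N q c (below j (m + 1)))
    (γ N q c (dual (below j (m + 1))))

/-- Central element of the subalgebra generated by `γ_{j-m}, …, γ_{j+m}`, where `j = j'` is the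
middle index and `m ≤ j`; for `m = j` it is central in `Cl_N(q,c)`. -/
def centralElt (N : ℕ) (q c : ℂ) (j : Fin N) : ℕ → Cl N q c
  | 0 => γ N q c j
  | m + 1 => centralElt N q c j m * centralFactor N q c j m

lemma isLeftRegular_centralFactor (hq : q ≠ 0) (hq2 : q ^ 2 ≠ -1) (hc : c ≠ 0)
    (hj : 2 * j.val + 1 = N) (hm : m < j.val) : IsLeftRegular (centralFactor N q c j m) := by
  have hlt : 2 * (below j (m + 1)).val + 1 < N := by simp only [below]; omega
  exact isLeftRegular_weightedAnticomm_γ one_ne_zero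
    (pow_ne_zero _ (neg_ne_zero.mpr (pow_ne_zero 2 hq))) hlt
    (isLeftRegular_anticomm hq hq2 hc hlt.le)

lemma isLeftRegular_centralElt (hq : q ≠ 0) (hq2 : q ^ 2 ≠ -1) (hc : c ≠ 0)
    (hj : 2 * j.val + 1 = N) (hm : m ≤ j.val) : IsLeftRegular (centralElt N q c j m) := by
  induction m with
  | zero => exact isLeftRegular_γ_of_eq_dual hq hq2 hc hj
  | succ m ih => exact (ih (by omega)).mul (isLeftRegular_centralFactor hq hq2 hc hj hm)

lemma qcommute_centralElt_of_mul_dual_eq_one {μ : Fin N → ℂ} {z : Cl N q c}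
    (hz : ∀ i, QCommute (μ i) z (γ N q c i))
    (hμ : ∀ i : Fin N, 2 * i.val + 1 < N → μ i * μ (dual i) = 1)
    (hj : 2 * j.val + 1 = N) (hm : m ≤ j.val) : QCommute (μ j) z (centralElt N q c j m) := by
  induction m with
  | zero => exact hz j
  | succ m ih =>
    have hlt : 2 * (below j (m + 1)).val + 1 < N := by simp only [below]; omega
    have hfactor : Commute z (centralFactor N q c j m) :=
      (hz _).commute_weightedAnticomm (hμ _ hlt) (hz _) _ _
    simpa only [centralElt, mul_one] using (ih (by omega)).mul_right (QCommute.one_iff.mpr hfactor)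

lemma qcommute_centralElt {s : ℂ} {u : Cl N q c} (hj : 2 * j.val + 1 = N) (hm : m ≤ j.val)
    (h : ∀ i : Fin N, j.val ≤ i.val + m → i.val ≤ j.val + m → QCommute s u (γ N q c i)) :
    QCommute (s ^ (2 * m + 1)) u (centralElt N q c j m) := by
  induction m with
  | zero =>
    rw [mul_zero, zero_add, pow_one]
    exact h j le_rfl le_rfl
  | succ m ih =>
    have hx : QCommute s u (γ N q c (below j (m + 1))) :=
      h _ (by simp only [below]; omega) (by simp only [below]; omega)
    have hy : QCommute s u (γ N q c (dual (below j (m + 1)))) :=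
      h _ (by simp only [dual, below]; omega) (by simp only [dual, below]; omega)
    have hprev := ih (by omega) fun i hl hu => h i (by omega) (by omega)
    have hnext := hprev.mul_right (hx.weightedAnticomm_right hy 1 ((-q ^ 2) ^ (2 * m + 1)))
    rwa [← pow_two, ← pow_add] at hnext

lemma qcommute_centralElt_of_lt (hq : q ≠ 0) (hj : 2 * j.val + 1 = N)
    (hi : i.val + m < j.val) :
    QCommute ((-q ^ 2)⁻¹ ^ (2 * m + 1)) (γ N q c i) (centralElt N q c j m) :=
  qcommute_centralElt hj (by omega) fun _ _ _ =>
    qcommute_γ_of_lt hq (Fin.lt_def.mpr (by omega)) (by omega)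

lemma qcommute_centralElt_of_gt (hj : 2 * j.val + 1 = N) (hi : j.val + m < i.val) :
    QCommute ((-q ^ 2) ^ (2 * m + 1)) (γ N q c i) (centralElt N q c j m) :=
  qcommute_centralElt hj (by omega) fun _ _ _ =>
    qcommute_γ_of_gt (Fin.lt_def.mpr (by omega)) (by omega)

lemma commute_γ_centralFactor (hq : q ≠ 0) (hj : 2 * j.val + 1 = N) (hm : m < j.val)
    (hl : j.val ≤ i.val + m) (hu : i.val ≤ j.val + m) :
    Commute (γ N q c i) (centralFactor N q c j m) := by
  have hx : QCommute (-q ^ 2) (γ N q c i) (γ N q c (below j (m + 1))) :=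
    qcommute_γ_of_gt (by simp only [below, Fin.lt_def]; omega) (by simp only [below]; omega)
  have hy : QCommute (-q ^ 2)⁻¹ (γ N q c i) (γ N q c (dual (below j (m + 1)))) :=
    qcommute_γ_of_lt hq (by simp only [dual, below, Fin.lt_def]; omega)
      (by simp only [dual, below]; omega)
  exact hx.commute_weightedAnticomm
    (mul_inv_cancel₀ (neg_ne_zero.mpr (pow_ne_zero 2 hq))) hy _ _

lemma commute_γ_centralElt (hq : q ≠ 0) (hj : 2 * j.val + 1 = N) (hm : m ≤ j.val)
    (hl : j.val ≤ i.val + m) (hu : i.val ≤ j.val + m) :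
    Commute (γ N q c i) (centralElt N q c j m) := by
  induction m with
  | zero =>
    obtain rfl : i = j := Fin.ext (le_antisymm hu hl)
    exact Commute.refl _
  | succ m ih =>
    have hs : -q ^ 2 ≠ 0 := neg_ne_zero.mpr (pow_ne_zero 2 hq)
    by_cases hx : i = below j (m + 1)
    · subst hx
      have hout := qcommute_centralElt_of_lt (c := c) (i := below j (m + 1)) (m := m) hq hj
        (by simp only [below]; omega)
      rw [inv_pow] at hout
      exact commute_left_mul_weightedAnticomm (γ_mul_self (by simp only [below]; omega)) hout
        (pow_ne_zero _ hs)
    by_cases hy : i = dual (below j (m + 1))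
    · subst hy
      exact commute_right_mul_weightedAnticomm (γ_mul_self (by simp only [dual, below]; omega))
        (qcommute_centralElt_of_gt hj (by simp only [dual, below]; omega))
    · simp only [Fin.ext_iff, dual, below] at hx hy
      exact (ih (by omega) (by omega) (by omega)).mul_right
        (commute_γ_centralFactor hq hj hm (by omega) (by omega))

lemma commute_centralElt (hq : q ≠ 0) (hj : 2 * j.val + 1 = N) (z : Cl N q c) :
    Commute z (centralElt N q c j j.val) :=
  commute_of_forall_commute_γ
    (fun i => commute_γ_centralElt hq hj le_rfl (Nat.le_add_left _ _) (by omega)) z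

end CentralElement

theorem mu_mul_mu_dual_eq_one_general (N : ℕ) (q c : ℂ) (hq : q ≠ 0) (hq2 : q ^ 2 ≠ -1)
    (hc : c ≠ 0) (μ : Fin N → ℂ) (z : Cl N q c) (hz0 : z ≠ 0)
    (hz : ∀ i : Fin N, z * γ N q c i = μ i • (γ N q c i * z)) :
    (∀ i : Fin N, μ i * μ (dual i) = 1) ∧
    (∀ j : Fin N, 2 * j.val + 1 = N → μ j = 1) := by
  have hlow (i : Fin N) (h : 2 * i.val + 1 < N) : μ i * μ (dual i) = 1 :=
    mul_dual_eq_one_of_lt_dual hq hq2 hc hz0 hz h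
  have hmid (j : Fin N) (hj : 2 * j.val + 1 = N) : μ j = 1 :=
    (qcommute_centralElt_of_mul_dual_eq_one hz hlow hj le_rfl).eq_one_of_commute
      (commute_centralElt hq hj z) (isLeftRegular_centralElt hq hq2 hc hj le_rfl) hz0
  refine ⟨fun i => ?_, hmid⟩
  rcases lt_trichotomy (2 * i.val + 1) N with h | h | h
  · exact hlow i h
  · rw [dual_eq_self h, hmid i h, mul_one]
  · rw [mul_comm]
    simpa only [dual_dual] using hlow (dual i) (by simp only [dual]; omega)

/-- if `z ≠ 0` and `zγ_i = μ_i γ_i z` for all `i` with all `μ_i ≠ 0`, then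
`μ_i μ_{i'} = 1` for all `i`, and `μ_j = 1` for `j = j'`. -/
theorem mu_mul_mu_dual_eq_one (N : ℕ) (hN : 3 ≤ N) (q c : ℂ)
    (hq : q ≠ 0) (hqr : ∀ m : ℕ, 0 < m → q ^ m ≠ 1) (hc : c ≠ 0)
    (μ : Fin N → ℂ) (hμ : ∀ i, μ i ≠ 0)
    (z : Cl N q c) (hz0 : z ≠ 0)
    (hz : ∀ i : Fin N, z * γ N q c i = μ i • (γ N q c i * z)) :
    (∀ i : Fin N, μ i * μ (dual i) = 1) ∧
    (∀ j : Fin N, 2 * j.val + 1 = N → μ j = 1) :=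
  mu_mul_mu_dual_eq_one_general N q c hq
    (fun h => hqr 4 (by norm_num) (by linear_combination (q ^ 2 - 1) * h)) hc μ z hz0 hz

end FRT
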